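/- Characterization of definite non-provability: for every propositional defeasible theory T and literal q, T ⊢ -Δq if and only if M_Δ(q)=False for every defeasible model M of T. -/

import Mathlib

/-- A literal is an atom or its negation. -/
inductive Lit (Atom : Type) where
  | pos : Atom → Lit Atom
  | neg : Atom → Lit Atom
  deriving DecidableEq

/-- The complement `~q` of a literal `q`. -/
def Lit.compl {Atom : Type} : Lit Atom → Lit Atom
  | .pos a => .neg a
  | .neg a => .pos a

/-- The three kinds of rules: strict, defeasible, defeater. -/
inductive RuleKind where
  | strict
  | defeasible
  | defeater
  deriving DecidableEq

/-- A rule: a kind, a finite set of literals as body (antecedent), and a head literal. -/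
structure DRule (Atom : Type) where
  kind : RuleKind
  body : Finset (Lit Atom)
  head : Lit Atom
  deriving DecidableEq

/-- A rule is strict-or-defeasible (a "supportive" rule). -/
def DRule.isSd {Atom : Type} (r : DRule Atom) : Prop :=
  r.kind = RuleKind.strict ∨ r.kind = RuleKind.defeasible

/-- A propositional defeasible theory: finite set of facts, finite set of rules,
and a superiority relation on rules. -/
structure DTheory (Atom : Type) where
  facts : Finset (Lit Atom)
  rules : Finset (DRule Atom)
  sup : DRule Atom → DRule Atom → Prop

/-- Acyclicity of the superiority relation. -/
def SupAcyclic {Atom : Type} (T : DTheory Atom) : Prop :=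
  ∀ r : DRule Atom, ¬ Relation.TransGen T.sup r r

/-- Conclusions: tagged literals +Δq, -Δq, +∂q, -∂q. -/
inductive Concl (Atom : Type) where
  | plusDelta : Lit Atom → Concl Atom
  | minusDelta : Lit Atom → Concl Atom
  | plusPartial : Lit Atom → Concl Atom
  | minusPartial : Lit Atom → Concl Atom
  deriving DecidableEq

/-- The inference rules of DL: `Licensed T prev c` holds when the conclusion `c`
may be appended to a derivation whose preceding part is `prev`. -/
def Licensed {Atom : Type} (T : DTheory Atom)
    (prev : List (Concl Atom)) : Concl Atom → Prop
  | .plusDelta q =>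
      q ∈ T.facts ∨
      ∃ r ∈ T.rules, r.kind = RuleKind.strict ∧ r.head = q ∧
        ∀ a ∈ r.body, Concl.plusDelta a ∈ prev
  | .minusDelta q =>
      q ∉ T.facts ∧
      ∀ r ∈ T.rules, r.kind = RuleKind.strict → r.head = q →
        ∃ a ∈ r.body, Concl.minusDelta a ∈ prev
  | .plusPartial q =>
      (Concl.plusDelta q ∈ prev) ∨
      ((∃ r ∈ T.rules, r.isSd ∧ r.head = q ∧
          ∀ a ∈ r.body, Concl.plusPartial a ∈ prev) ∧
       (Concl.minusDelta q.compl ∈ prev) ∧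
       ∀ s ∈ T.rules, s.head = q.compl →
         ((∃ a ∈ s.body, Concl.minusPartial a ∈ prev) ∨
          (∃ t ∈ T.rules, t.isSd ∧ t.head = q ∧ T.sup t s ∧
            ∀ a ∈ t.body, Concl.plusPartial a ∈ prev)))
  | .minusPartial q =>
      (Concl.minusDelta q ∈ prev) ∧
      ((∀ r ∈ T.rules, r.isSd → r.head = q →
          ∃ a ∈ r.body, Concl.minusPartial a ∈ prev) ∨
       (Concl.plusDelta q.compl ∈ prev) ∨
       (∃ s ∈ T.rules, s.head = q.compl ∧
          (∀ a ∈ s.body, Concl.plusPartial a ∈ prev) ∧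
          ∀ t ∈ T.rules, t.isSd → t.head = q →
            ((∃ a ∈ t.body, Concl.minusPartial a ∈ prev) ∨ ¬ T.sup t s)))

/-- A derivation: each element of the sequence is licensed given the preceding part. -/
def DLDerivation {Atom : Type} (T : DTheory Atom)
    (P : List (Concl Atom)) : Prop :=
  ∀ i : Fin P.length, Licensed T (P.take i) (P.get i)

/-- `T ⊢ c`: some derivation in `T` ends with conclusion `c`. -/
def DLProves {Atom : Type} (T : DTheory Atom) (c : Concl Atom) : Prop :=
  ∃ P : List (Concl Atom), DLDerivation T P ∧ P.getLast? = some c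

/-- A defeasible interpretation: two partial functions from literals to booleans
(modelled as `Option Bool`-valued functions), `del` for definite knowledge (Δ) and
`par` for defeasible belief (∂). -/
structure DInterp (Atom : Type) where
  del : Lit Atom → Option Bool
  par : Lit Atom → Option Bool

/-- The coherence conditions on defeasible interpretations: what is known is believed,
and what is not believed is not known. -/
def DInterp.Coherent {Atom : Type} (I : DInterp Atom) : Prop :=
  (∀ q : Lit Atom, I.del q = some true → I.par q = some true) ∧
  (∀ q : Lit Atom, I.par q = some false → I.del q = some false)

open Classical in
/-- Kleene conjunction of a partial boolean function over a finite set of literals: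
`False` if some member maps to `False`, `True` if every member maps to `True`,
undefined otherwise. -/
noncomputable def kleeneAll {Atom : Type} (f : Lit Atom → Option Bool)
    (S : Finset (Lit Atom)) : Option Bool :=
  if ∃ a ∈ S, f a = some false then some false
  else if ∀ a ∈ S, f a = some true then some true
  else none

/-- The four model conditions (MΔ+), (MΔ-), (M∂+), (M∂-). -/
def ModelConditions {Atom : Type} (T : DTheory Atom)
    (I : DInterp Atom) : Prop :=
  (∀ q : Lit Atom,
    I.del q = some true ↔
      (q ∈ T.facts ∨
       ∃ r ∈ T.rules, r.kind = RuleKind.strict ∧ r.head = q ∧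
         kleeneAll I.del r.body = some true)) ∧
  (∀ q : Lit Atom,
    I.del q = some false ↔
      (q ∉ T.facts ∧
       ∀ r ∈ T.rules, r.kind = RuleKind.strict → r.head = q →
         kleeneAll I.del r.body = some false)) ∧
  (∀ q : Lit Atom,
    I.par q = some true ↔
      (I.del q = some true ∨
       ((∃ r ∈ T.rules, r.isSd ∧ r.head = q ∧ kleeneAll I.par r.body = some true) ∧
        I.del q.compl = some false ∧
        ∀ s ∈ T.rules, s.head = q.compl →
          (kleeneAll I.par s.body = some false ∨
           ∃ t ∈ T.rules, t.isSd ∧ t.head = q ∧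
             kleeneAll I.par t.body = some true ∧ T.sup t s)))) ∧
  (∀ q : Lit Atom,
    I.par q = some false ↔
      (I.del q = some false ∧
       ((∀ r ∈ T.rules, r.isSd → r.head = q → kleeneAll I.par r.body = some false) ∨
        I.del q.compl = some true ∨
        (∃ s ∈ T.rules, s.head = q.compl ∧ kleeneAll I.par s.body = some true ∧
          ∀ t ∈ T.rules, t.isSd → t.head = q →
            (kleeneAll I.par t.body = some false ∨ ¬ T.sup t s)))))

/-- A defeasible model of `T`: a defeasible interpretation (coherent pair of partial
functions) satisfying the four model conditions. -/
def IsModel {Atom : Type} (T : DTheory Atom) (I : DInterp Atom) : Prop :=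
  I.Coherent ∧ ModelConditions T I

/-- A conclusion holds in an interpretation. -/
def DLHolds {Atom : Type} (I : DInterp Atom) : Concl Atom → Prop
  | .plusDelta q => I.del q = some true
  | .minusDelta q => I.del q = some false
  | .plusPartial q => I.par q = some true
  | .minusPartial q => I.par q = some false


/-- The inference rules relative to an arbitrary predicate of available conclusions. -/
def LicP {Atom : Type} (T : DTheory Atom)
    (X : Concl Atom → Prop) : Concl Atom → Prop
  | .plusDelta q =>
      q ∈ T.facts ∨
      ∃ r ∈ T.rules, r.kind = RuleKind.strict ∧ r.head = q ∧
        ∀ a ∈ r.body, X (Concl.plusDelta a)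
  | .minusDelta q =>
      q ∉ T.facts ∧
      ∀ r ∈ T.rules, r.kind = RuleKind.strict → r.head = q →
        ∃ a ∈ r.body, X (Concl.minusDelta a)
  | .plusPartial q =>
      (X (Concl.plusDelta q)) ∨
      ((∃ r ∈ T.rules, r.isSd ∧ r.head = q ∧
          ∀ a ∈ r.body, X (Concl.plusPartial a)) ∧
       (X (Concl.minusDelta q.compl)) ∧
       ∀ s ∈ T.rules, s.head = q.compl →
         ((∃ a ∈ s.body, X (Concl.minusPartial a)) ∨
          (∃ t ∈ T.rules, t.isSd ∧ t.head = q ∧ T.sup t s ∧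
            ∀ a ∈ t.body, X (Concl.plusPartial a))))
  | .minusPartial q =>
      (X (Concl.minusDelta q)) ∧
      ((∀ r ∈ T.rules, r.isSd → r.head = q →
          ∃ a ∈ r.body, X (Concl.minusPartial a)) ∨
       (X (Concl.plusDelta q.compl)) ∨
       (∃ s ∈ T.rules, s.head = q.compl ∧
          (∀ a ∈ s.body, X (Concl.plusPartial a)) ∧
          ∀ t ∈ T.rules, t.isSd → t.head = q →
            ((∃ a ∈ t.body, X (Concl.minusPartial a)) ∨ ¬ T.sup t s)))

theorem licensed_iff {Atom : Type} (T : DTheory Atom) (P : List (Concl Atom)) (c : Concl Atom) :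
    Licensed T P c ↔ LicP T (fun d => d ∈ P) c := by
  cases c <;> exact Iff.rfl

/-- The literal of a conclusion. -/
def Concl.lit {Atom : Type} : Concl Atom → Lit Atom
  | .plusDelta q => q
  | .minusDelta q => q
  | .plusPartial q => q
  | .minusPartial q => q

/-- Monotonicity, restricted to the literals that matter. -/
theorem LicP_mono {Atom : Type} (T : DTheory Atom) (X Y : Concl Atom → Prop) (c : Concl Atom)
    (h : ∀ d, X d → (d.lit = c.lit ∨ d.lit = c.lit.compl ∨ ∃ r ∈ T.rules, d.lit ∈ r.body) → Y d)
    (hc : LicP T X c) : LicP T Y c := by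
  have hb : ∀ r ∈ T.rules, ∀ d : Concl Atom, d.lit ∈ r.body → X d → Y d :=
    fun r hr d hd hX => h d hX (Or.inr (Or.inr ⟨r, hr, hd⟩))
  have h1 : ∀ r ∈ T.rules, (∀ a ∈ r.body, X (.plusDelta a)) → ∀ a ∈ r.body, Y (.plusDelta a) :=
    fun r hr hX a ha => hb r hr (.plusDelta a) ha (hX a ha)
  have h2 : ∀ r ∈ T.rules, (∃ a ∈ r.body, X (.minusDelta a)) → ∃ a ∈ r.body, Y (.minusDelta a) :=
    fun r hr ⟨a, ha, hX⟩ => ⟨a, ha, hb r hr (.minusDelta a) ha hX⟩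
  have h3 : ∀ r ∈ T.rules, (∀ a ∈ r.body, X (.plusPartial a)) →
      ∀ a ∈ r.body, Y (.plusPartial a) :=
    fun r hr hX a ha => hb r hr (.plusPartial a) ha (hX a ha)
  have h4 : ∀ r ∈ T.rules, (∃ a ∈ r.body, X (.minusPartial a)) →
      ∃ a ∈ r.body, Y (.minusPartial a) :=
    fun r hr ⟨a, ha, hX⟩ => ⟨a, ha, hb r hr (.minusPartial a) ha hX⟩
  cases c with
  | plusDelta q =>
    rcases hc with hc | ⟨r, hr, hk, hq, hX⟩
    · exact Or.inl hc
    · exact Or.inr ⟨r, hr, hk, hq, h1 r hr hX⟩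
  | minusDelta q =>
    exact ⟨hc.1, fun r hr hk hq => h2 r hr (hc.2 r hr hk hq)⟩
  | plusPartial q =>
    rcases hc with hc | ⟨⟨r, hr, hk, hq, hX⟩, hd, hs⟩
    · exact Or.inl (h _ hc (Or.inl rfl))
    · refine Or.inr ⟨⟨r, hr, hk, hq, h3 r hr hX⟩, h _ hd (Or.inr (Or.inl rfl)), ?_⟩
      intro s hs1 hs2
      rcases hs s hs1 hs2 with h5 | ⟨t, ht, hk, hq, hts, hX⟩
      · exact Or.inl (h4 s hs1 h5)
      · exact Or.inr ⟨t, ht, hk, hq, hts, h3 t ht hX⟩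
  | minusPartial q =>
    obtain ⟨hd, hc⟩ := hc
    refine ⟨h _ hd (Or.inl rfl), ?_⟩
    rcases hc with hc | hc | ⟨s, hs, hq, hX, ht⟩
    · exact Or.inl fun r hr hk hq => h4 r hr (hc r hr hk hq)
    · exact Or.inr (Or.inl (h _ hc (Or.inr (Or.inl rfl))))
    · exact Or.inr (Or.inr ⟨s, hs, hq, h3 s hs hX,
        fun t ht1 hk hq => (ht t ht1 hk hq).imp_left (h4 t ht1)⟩)

theorem deriv_snoc {Atom : Type} (T : DTheory Atom) (P : List (Concl Atom)) (c : Concl Atom) :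
    DLDerivation T (P ++ [c]) ↔ DLDerivation T P ∧ Licensed T P c := by
  constructor
  · intro h
    constructor
    · intro i
      have h1 := h ⟨i.1, by simp⟩
      simpa [List.take_append_of_le_length i.2.le, List.getElem_append_left i.2] using h1
    · have h1 := h ⟨P.length, by simp⟩
      simpa using h1
  · rintro ⟨h, hc⟩ ⟨i, hi⟩
    rcases Nat.lt_or_ge i P.length with h1 | h1
    · have h2 := h ⟨i, h1⟩
      simpa [List.take_append_of_le_length h1.le, List.getElem_append_left h1] using h2
    · have : i = P.length := by simp at hi; omega
      subst this
      simpa using hc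

theorem deriv_append {Atom : Type} (T : DTheory Atom) (P Q : List (Concl Atom))
    (hP : DLDerivation T P) (hQ : DLDerivation T Q) : DLDerivation T (P ++ Q) := by
  induction Q using List.reverseRecOn with
  | nil => simpa using hP
  | append_singleton Q c ih =>
    rw [deriv_snoc] at hQ
    rw [← List.append_assoc, deriv_snoc]
    refine ⟨ih hQ.1, ?_⟩
    rw [licensed_iff] at *
    exact LicP_mono T _ _ c (fun d hd _ => List.mem_append_right _ hd) ((licensed_iff T Q c).1 hQ.2)

/-- Occurring in some derivation. -/
def Prov {Atom : Type} (T : DTheory Atom) (c : Concl Atom) : Prop :=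
  ∃ P : List (Concl Atom), DLDerivation T P ∧ c ∈ P

theorem deriv_licensed {Atom : Type} (T : DTheory Atom) (P : List (Concl Atom))
    (hP : DLDerivation T P) (c : Concl Atom) (hc : c ∈ P) : LicP T (fun d => d ∈ P) c := by
  induction P using List.reverseRecOn with
  | nil => simp at hc
  | append_singleton Q e ih =>
    rw [deriv_snoc] at hP
    have : LicP T (fun d => d ∈ Q) c := by
      rcases List.mem_append.1 hc with h | h
      · exact ih hP.1 h
      · rw [List.mem_singleton.1 h]
        exact (licensed_iff T Q e).1 hP.2
    exact LicP_mono T _ _ c (fun d hd _ => List.mem_append_left _ hd) this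

theorem gather {Atom : Type} (T : DTheory Atom) (S : Set (Concl Atom)) (hS : S.Finite) :
    ∃ P, DLDerivation T P ∧ ∀ c ∈ S, Prov T c → c ∈ P := by
  induction S, hS using Set.Finite.induction_on with
  | empty => exact ⟨[], fun i => i.elim0, by simp⟩
  | @insert a S ha hS ih =>
    obtain ⟨P, hP, h⟩ := ih
    by_cases hp : Prov T a
    · obtain ⟨Q, hQ, haQ⟩ := hp
      refine ⟨P ++ Q, deriv_append T P Q hP hQ, ?_⟩
      rintro c (rfl | hc) hpc
      · exact List.mem_append_right _ haQ
      · exact List.mem_append_left _ (h c hc hpc)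
    · refine ⟨P, hP, ?_⟩
      rintro c (rfl | hc) hpc
      · exact absurd hpc hp
      · exact h c hc hpc

theorem finite_relevant {Atom : Type} (T : DTheory Atom) (q : Lit Atom) :
    {d : Concl Atom | d.lit = q ∨ d.lit = q.compl ∨ ∃ r ∈ T.rules, d.lit ∈ r.body}.Finite := by
  have hL : ({l : Lit Atom | l = q ∨ l = q.compl ∨ ∃ r ∈ T.rules, l ∈ r.body}).Finite := by
    have : {l : Lit Atom | l = q ∨ l = q.compl ∨ ∃ r ∈ T.rules, l ∈ r.body}
        = {q} ∪ ({q.compl} ∪ ⋃ r ∈ T.rules, (r.body : Set (Lit Atom))) := by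
      ext l; simp; tauto
    rw [this]
    exact (Set.finite_singleton _).union ((Set.finite_singleton _).union
      (Set.Finite.biUnion T.rules.finite_toSet fun r _ => r.body.finite_toSet))
  refine ((((hL.image Concl.plusDelta).union (hL.image Concl.minusDelta)).union
    (hL.image Concl.plusPartial)).union (hL.image Concl.minusPartial)).subset ?_
  intro d hd
  cases d with
  | plusDelta l => exact Or.inl (Or.inl (Or.inl ⟨l, hd, rfl⟩))
  | minusDelta l => exact Or.inl (Or.inl (Or.inr ⟨l, hd, rfl⟩))
  | plusPartial l => exact Or.inl (Or.inr ⟨l, hd, rfl⟩)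
  | minusPartial l => exact Or.inr ⟨l, hd, rfl⟩

theorem proves_of_lic {Atom : Type} (T : DTheory Atom) (c : Concl Atom)
    (h : LicP T (Prov T) c) : DLProves T c := by
  obtain ⟨P, hP, hS⟩ := gather T _ (finite_relevant T c.lit)
  refine ⟨P ++ [c], (deriv_snoc T P c).2 ⟨hP, ?_⟩, by simp⟩
  rw [licensed_iff]
  exact LicP_mono T _ _ c (fun d hd hr => hS d hr hd) h

theorem prov_iff {Atom : Type} (T : DTheory Atom) (c : Concl Atom) :
    Prov T c ↔ LicP T (Prov T) c := by
  constructor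
  · rintro ⟨P, hP, hc⟩
    exact LicP_mono T _ _ c (fun d hd _ => ⟨P, hP, hd⟩) (deriv_licensed T P hP c hc)
  · intro h
    obtain ⟨P, hP, hl⟩ := proves_of_lic T c h
    exact ⟨P, hP, List.mem_of_getLast? hl⟩

theorem consistent_step {Atom : Type} (T : DTheory Atom) (X : Concl Atom → Prop)
    (hX : ∀ q, ¬ (X (.plusDelta q) ∧ X (.minusDelta q)) ∧
      ¬ (X (.plusPartial q) ∧ X (.minusPartial q))) (q : Lit Atom) :
    ¬ (LicP T X (.plusDelta q) ∧ LicP T X (.minusDelta q)) ∧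
      ¬ (LicP T X (.plusPartial q) ∧ LicP T X (.minusPartial q)) := by
  have hp : ∀ r : DRule Atom, (∀ a ∈ r.body, X (.plusPartial a)) →
      (∃ a ∈ r.body, X (.minusPartial a)) → False :=
    fun r h1 ⟨a, ha, h2⟩ => (hX a).2 ⟨h1 a ha, h2⟩
  constructor
  · rintro ⟨h | ⟨r, hr, hk, hq, h⟩, h1, h2⟩
    · exact h1 h
    · obtain ⟨a, ha, h3⟩ := h2 r hr hk hq
      exact (hX a).1 ⟨h a ha, h3⟩
  · rintro ⟨h | ⟨⟨r, hr, hk, hq, h⟩, hd, hs⟩, h1, h2⟩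
    · exact (hX q).1 ⟨h, h1⟩
    · rcases h2 with h2 | h2 | ⟨s, hs1, hs2, hs3, ht⟩
      · exact hp r h (h2 r hr hk hq)
      · exact (hX _).1 ⟨h2, hd⟩
      · rcases hs s hs1 hs2 with h5 | ⟨t, ht1, ht2, ht3, ht4, ht5⟩
        · exact hp s hs3 h5
        · rcases ht t ht1 ht2 ht3 with h6 | h6
          · exact hp t ht5 h6
          · exact h6 ht4

theorem deriv_consistent {Atom : Type} (T : DTheory Atom) (P : List (Concl Atom))
    (hP : DLDerivation T P) (q : Lit Atom) :
    ¬ (Concl.plusDelta q ∈ P ∧ Concl.minusDelta q ∈ P) ∧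
      ¬ (Concl.plusPartial q ∈ P ∧ Concl.minusPartial q ∈ P) := by
  induction P using List.reverseRecOn generalizing q with
  | nil => simp
  | append_singleton Q e ih =>
    rw [deriv_snoc] at hP
    have hl : ∀ c ∈ Q ++ [e], LicP T (fun d => d ∈ Q) c := by
      intro c hc
      rcases List.mem_append.1 hc with h | h
      · exact deriv_licensed T Q hP.1 c h
      · rw [List.mem_singleton.1 h]
        exact (licensed_iff T Q e).1 hP.2
    have := consistent_step T (fun d => d ∈ Q) (ih hP.1) q
    exact ⟨fun h => this.1 ⟨hl _ h.1, hl _ h.2⟩, fun h => this.2 ⟨hl _ h.1, hl _ h.2⟩⟩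

theorem prov_consistent {Atom : Type} (T : DTheory Atom) (q : Lit Atom) :
    ¬ (Prov T (.plusDelta q) ∧ Prov T (.minusDelta q)) ∧
      ¬ (Prov T (.plusPartial q) ∧ Prov T (.minusPartial q)) := by
  constructor
  · rintro ⟨⟨P, hP, h1⟩, ⟨Q, hQ, h2⟩⟩
    exact (deriv_consistent T _ (deriv_append T P Q hP hQ) q).1
      ⟨List.mem_append_left _ h1, List.mem_append_right _ h2⟩
  · rintro ⟨⟨P, hP, h1⟩, ⟨Q, hQ, h2⟩⟩
    exact (deriv_consistent T _ (deriv_append T P Q hP hQ) q).2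
      ⟨List.mem_append_left _ h1, List.mem_append_right _ h2⟩

theorem kleene_false {Atom : Type} (f : Lit Atom → Option Bool) (S : Finset (Lit Atom)) :
    kleeneAll f S = some false ↔ ∃ a ∈ S, f a = some false := by
  unfold kleeneAll
  split_ifs with h1 h2
  · exact ⟨fun _ => h1, fun _ => rfl⟩
  · exact ⟨fun h => by simp at h, fun h => absurd h h1⟩
  · exact ⟨fun h => by simp at h, fun h => absurd h h1⟩

theorem kleene_true {Atom : Type} (f : Lit Atom → Option Bool) (S : Finset (Lit Atom)) :
    kleeneAll f S = some true ↔ ∀ a ∈ S, f a = some true := by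
  unfold kleeneAll
  split_ifs with h1 h2
  · refine ⟨fun h => by simp at h, fun h => ?_⟩
    obtain ⟨a, ha, h3⟩ := h1
    rw [h a ha] at h3
    simp at h3
  · exact ⟨fun _ => h2, fun _ => rfl⟩
  · exact ⟨fun h => by simp at h, fun h => absurd h h2⟩

open Classical in
/-- The canonical interpretation: what is provable. -/
noncomputable def canon {Atom : Type} (T : DTheory Atom) : DInterp Atom where
  del q := if Prov T (.plusDelta q) then some true
    else if Prov T (.minusDelta q) then some false else none
  par q := if Prov T (.plusPartial q) then some true
    else if Prov T (.minusPartial q) then some false else none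

theorem canon_del_true {Atom : Type} (T : DTheory Atom) (q : Lit Atom) :
    (canon T).del q = some true ↔ Prov T (.plusDelta q) := by
  simp only [canon]; split_ifs <;> simp_all

theorem canon_par_true {Atom : Type} (T : DTheory Atom) (q : Lit Atom) :
    (canon T).par q = some true ↔ Prov T (.plusPartial q) := by
  simp only [canon]; split_ifs <;> simp_all

theorem canon_del_false {Atom : Type} (T : DTheory Atom) (q : Lit Atom) :
    (canon T).del q = some false ↔ Prov T (.minusDelta q) := by
  have := (prov_consistent T q).1
  simp only [canon]; split_ifs <;> simp_all

theorem canon_par_false {Atom : Type} (T : DTheory Atom) (q : Lit Atom) :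
    (canon T).par q = some false ↔ Prov T (.minusPartial q) := by
  have := (prov_consistent T q).2
  simp only [canon]; split_ifs <;> simp_all

theorem canon_model {Atom : Type} (T : DTheory Atom) : IsModel T (canon T) := by
  refine ⟨⟨fun q => ?_, fun q => ?_⟩, fun q => ?_, fun q => ?_, fun q => ?_, fun q => ?_⟩ <;>
    simp only [kleene_true, kleene_false, canon_del_true, canon_del_false, canon_par_true,
      canon_par_false]
  · exact fun h => (prov_iff T _).2 (Or.inl h)
  · exact fun h => ((prov_iff T _).1 h).1
  · exact prov_iff T _
  · exact prov_iff T _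
  · refine (prov_iff T _).trans ?_
    simp only [LicP]
    simp only [and_comm (a := T.sup _ _)]
  · exact prov_iff T _

theorem sound_minusDelta {Atom : Type} (T : DTheory Atom) (I : DInterp Atom) (hI : IsModel T I)
    (P : List (Concl Atom)) (hP : DLDerivation T P) (q : Lit Atom)
    (hq : Concl.minusDelta q ∈ P) : I.del q = some false := by
  induction P using List.reverseRecOn generalizing q with
  | nil => simp at hq
  | append_singleton Q e ih =>
    rw [deriv_snoc] at hP
    rcases List.mem_append.1 hq with h | h
    · exact ih hP.1 q h
    · have h2 := hP.2
      rw [← List.mem_singleton.1 h] at h2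
      refine (hI.2.2.1 q).2 ⟨h2.1, fun r hr hk hh => ?_⟩
      obtain ⟨a, ha, h3⟩ := h2.2 r hr hk hh
      exact (kleene_false _ _).2 ⟨a, ha, ih hP.1 a h3⟩

/-- Characterization of definite non-provability. -/
theorem DL_minusDelta_char {Atom : Type} [Countable Atom] [DecidableEq Atom]
    (T : DTheory Atom) (hacyc : SupAcyclic T) (q : Lit Atom) :
    DLProves T (Concl.minusDelta q) ↔
      ∀ I : DInterp Atom, IsModel T I → I.del q = some false := by
  constructor
  · rintro ⟨P, hP, hl⟩ I hI
    exact sound_minusDelta T I hI P hP q (List.mem_of_getLast? hl)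
  · intro h
    exact proves_of_lic T _ ((prov_iff T _).1 ((canon_del_false T q).1 (h _ (canon_model T))))
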